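/- Fix a labelled Markov chain ⟨S, L, τ, ℓ⟩. Robust probabilistic bisimilarity ≃ is a robust bisimulation: it is a probabilistic bisimulation, and for every (s,t) with s ≃ t there exists a policy P ∈ P_τ such that ≃ supports a path from (s,t) to S²_Δ in ⟨S×S, P⟩. -/

import Mathlib

open Finset Filter
open scoped Classical

/-- `μ` is a probability distribution on the finite type `X`. -/
def IsDist {X : Type*} [Fintype X] (μ : X → ℝ) : Prop :=
  (∀ x, 0 ≤ μ x) ∧ ∑ x, μ x = 1

/-- `ω` is a coupling of the distributions `μ` and `ν`. -/
def IsCoupling {X : Type*} [Fintype X] (ω : X × X → ℝ) (μ ν : X → ℝ) : Prop :=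
  IsDist ω ∧ (∀ x, ∑ y, ω (x, y) = μ x) ∧ (∀ x, ∑ y, ω (y, x) = ν x)

/-- Total variation distance: the maximum pointwise difference. -/
noncomputable def dTV {X : Type*} [Fintype X] (μ ν : X → ℝ) : ℝ :=
  ⨆ x, |μ x - ν x|

/-- The support of a (sub)distribution: points of positive probability. -/
def psupp {X : Type*} (μ : X → ℝ) : Set X := {x | 0 < μ x}

/-- Distance between functions into distributions. -/
noncomputable def dF {A B : Type*} [Fintype B] (f g : A → B → ℝ) : ℝ :=
  ⨆ a, dTV (f a) (g a)

/-- `τ` is a transition probability function on `S`. -/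
def IsTransFn {S : Type*} [Fintype S] (τ : S → S → ℝ) : Prop := ∀ s, IsDist (τ s)

/-- The diagonal `S²_Δ`. -/
def SDelta (S : Type*) : Set (S × S) := {p | p.1 = p.2}

/-- `P` is a policy for `τ` (with labelling `ℓ`). -/
def IsPolicy {S L : Type*} [Fintype S] (ℓ : S → L) (τ : S → S → ℝ)
    (P : S × S → S × S → ℝ) : Prop :=
  (∀ p, IsDist (P p)) ∧
  (∀ p : S × S, ℓ p.1 = ℓ p.2 → IsCoupling (P p) (τ p.1) (τ p.2)) ∧
  (∀ p : S × S, ℓ p.1 ≠ ℓ p.2 → psupp (P p) = {p})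

/-- A policy is `S²_Δ`-closed if the support of `P (s,s)` lies in the diagonal. -/
def DeltaClosed {S : Type*} (P : S × S → S × S → ℝ) : Prop :=
  ∀ s : S, psupp (P (s, s)) ⊆ SDelta S

/-- `d` is a `[0,1]`-valued function. -/
def Is01 {A : Type*} (d : A → ℝ) : Prop := ∀ a, 0 ≤ d a ∧ d a ≤ 1

/-- `d` is the least fixed point of `F` on the complete lattice of `[0,1]`-valued functions. -/
def IsLfpOn {A : Type*} (F : (A → ℝ) → (A → ℝ)) (d : A → ℝ) : Prop :=
  Is01 d ∧ F d = d ∧ ∀ e, Is01 e → F e = e → ∀ a, d a ≤ e a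

/-- The map `Γ_P` whose least fixed point is `γ_P`. -/
noncomputable def GammaF {S L : Type*} [Fintype S] (ℓ : S → L)
    (P : S × S → S × S → ℝ) (d : S × S → ℝ) : S × S → ℝ :=
  fun p => if ℓ p.1 ≠ ℓ p.2 then 1 else ∑ q, P p q * d q

/-- The map `Δ_τ` whose least fixed point is the probabilistic bisimilarity distance `δ_τ`. -/
noncomputable def DeltaF {S L : Type*} [Fintype S] (ℓ : S → L)
    (τ : S → S → ℝ) (d : S × S → ℝ) : S × S → ℝ :=
  fun p => if ℓ p.1 ≠ ℓ p.2 then 1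
    else sInf {r | ∃ ω, IsCoupling ω (τ p.1) (τ p.2) ∧ r = ∑ q, ω q * d q}

/-- The map whose least fixed point is `ρ_P`, the probability of reaching `S²_Δ`. -/
noncomputable def ReachF {S : Type*} [Fintype S]
    (P : S × S → S × S → ℝ) (e : S × S → ℝ) : S × S → ℝ :=
  fun p => if p.1 = p.2 then 1 else ∑ q, P p q * e q

/-- States `s` and `t` are robustly probabilistically bisimilar. -/
def Robust {S L : Type*} [Fintype S] (ℓ : S → L) (τ : S → S → ℝ) (s t : S) : Prop :=
  ∃ P ρ, IsPolicy ℓ τ P ∧ IsLfpOn (ReachF P) ρ ∧ ρ (s, t) = 1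

/-- `R` is a probabilistic bisimulation. -/
def IsBisim {S L : Type*} [Fintype S] (ℓ : S → L) (τ : S → S → ℝ)
    (R : Set (S × S)) : Prop :=
  Equivalence (fun s t => (s, t) ∈ R) ∧
  ∀ p ∈ R, ℓ p.1 = ℓ p.2 ∧ ∃ ω, IsCoupling ω (τ p.1) (τ p.2) ∧ psupp ω ⊆ R

/-- Probabilistic bisimilarity `∼`. -/
def Bisimilar {S L : Type*} [Fintype S] (ℓ : S → L) (τ : S → S → ℝ) (s t : S) : Prop :=
  ∃ R, IsBisim ℓ τ R ∧ (s, t) ∈ R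

/-- A step of a path in `⟨S×S, P⟩` supported by `R`. -/
def SupStep {S : Type*} (P : S × S → S × S → ℝ) (R : Set (S × S)) (a b : S × S) : Prop :=
  a ∈ R ∧ psupp (P a) ⊆ R ∧ 0 < P a b

/-- `R` supports a path from `p` to `S²_Δ` in `⟨S×S, P⟩`. -/
def SupportsPathToDelta {S : Type*} (P : S × S → S × S → ℝ) (R : Set (S × S))
    (p : S × S) : Prop :=
  ∃ q : S × S, q.1 = q.2 ∧ Relation.ReflTransGen (SupStep P R) p q ∧
    q ∈ R ∧ psupp (P q) ⊆ R

/-- `R` is a robust bisimulation. -/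
def IsRobustBisim {S L : Type*} [Fintype S] (ℓ : S → L) (τ : S → S → ℝ)
    (R : Set (S × S)) : Prop :=
  IsBisim ℓ τ R ∧ ∀ p ∈ R, ∃ P, IsPolicy ℓ τ P ∧ SupportsPathToDelta P R p

/-- The function `Filter` from the algorithm. -/
def FilterFn {S L : Type*} [Fintype S] (ℓ : S → L) (τ : S → S → ℝ)
    (R : Set (S × S)) : Set (S × S) :=
  {p ∈ R | ∃ P, IsPolicy ℓ τ P ∧ SupportsPathToDelta P R p}

/-- The function `Prune` from the algorithm. -/
def PruneFn {S : Type*} (Q : Set (S × S)) : Set (S × S) :=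
  {p ∈ Q | ∀ u : S, ((p.2, u) ∈ Q → (p.1, u) ∈ Q) ∧ ((u, p.1) ∈ Q → (u, p.2) ∈ Q)}

/-- `B` is the greatest probabilistic bisimulation contained in `Q` (i.e. `B = Bisim(Q)`). -/
def IsGreatestBisimIn {S L : Type*} [Fintype S] (ℓ : S → L) (τ : S → S → ℝ)
    (Q B : Set (S × S)) : Prop :=
  IsBisim ℓ τ B ∧ B ⊆ Q ∧ ∀ B', IsBisim ℓ τ B' → B' ⊆ Q → B' ⊆ B

/-- Reachability in the Markov chain `⟨S×S, P⟩`. -/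
def Reach {S : Type*} (P : S × S → S × S → ℝ) (p q : S × S) : Prop :=
  Relation.ReflTransGen (fun a b => 0 < P a b) p q

/-- `C` is a communication class of `⟨S×S, P⟩`. -/
def IsCommClass {S : Type*} (P : S × S → S × S → ℝ) (C : Set (S × S)) : Prop :=
  ∃ p, C = {q | Reach P p q ∧ Reach P q p}

/-- `C` is closed: no transition of positive probability leaves `C`. -/
def IsClosedClass {S : Type*} (P : S × S → S × S → ℝ) (C : Set (S × S)) : Prop :=
  ∀ p ∈ C, psupp (P p) ⊆ C

theorem kt_aux {A : Type*} (F : (A → ℝ) → (A → ℝ))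
    (hmono : ∀ d e, (∀ a, d a ≤ e a) → ∀ a, F d a ≤ F e a)
    (h01 : ∀ d, Is01 d → Is01 (F d)) :
    ∃ ρ, Is01 ρ ∧ F ρ = ρ ∧ ∀ e, Is01 e → (∀ a, F e a ≤ e a) → ∀ a, ρ a ≤ e a := by
  let T : Set (A → ℝ) := {e | Is01 e ∧ ∀ a, F e a ≤ e a}
  have hone : (fun _ => (1 : ℝ)) ∈ T := by
    have h1 : Is01 (fun _ : A => (1 : ℝ)) := fun a => ⟨zero_le_one, le_refl _⟩
    exact ⟨h1, fun a => (h01 _ h1 a).2⟩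
  let ρ : A → ℝ := fun a => sInf ((fun e : A → ℝ => e a) '' T)
  have hbdd : ∀ a, BddBelow ((fun e : A → ℝ => e a) '' T) := by
    intro a
    refine ⟨0, ?_⟩
    rintro _ ⟨e, he, rfl⟩
    exact (he.1 a).1
  have hle : ∀ e ∈ T, ∀ a, ρ a ≤ e a := fun e he a => csInf_le (hbdd a) ⟨e, he, rfl⟩
  have hge : ∀ (a : A) (c : ℝ), (∀ e ∈ T, c ≤ e a) → c ≤ ρ a := by
    intro a c hc
    refine le_csInf ⟨_, _, hone, rfl⟩ ?_
    rintro _ ⟨e, he, rfl⟩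
    exact hc e he
  have hρ01 : Is01 ρ := fun a => ⟨hge a 0 fun e he => (he.1 a).1, hle _ hone a⟩
  have hpre : ∀ a, F ρ a ≤ ρ a := by
    intro a
    refine hge a _ fun e he => ?_
    exact (hmono _ _ (hle e he) a).trans (he.2 a)
  have hFT : F ρ ∈ T := ⟨h01 _ hρ01, hmono _ _ hpre⟩
  refine ⟨ρ, hρ01, funext fun a => le_antisymm (hpre a) (hle _ hFT a), ?_⟩
  intro e he h a
  exact hle e ⟨he, h⟩ a

theorem reach_kt {S : Type*} [Fintype S] (P : S × S → S × S → ℝ) (hP : ∀ p, IsDist (P p)) :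
    ∃ ρ, Is01 ρ ∧ ReachF P ρ = ρ ∧
      ∀ e, Is01 e → (∀ a, ReachF P e a ≤ e a) → ∀ a, ρ a ≤ e a := by
  apply kt_aux
  · intro d e h a
    unfold ReachF
    split_ifs
    · exact le_refl _
    · exact Finset.sum_le_sum fun q _ => mul_le_mul_of_nonneg_left (h q) ((hP a).1 q)
  · intro d h a
    unfold ReachF
    split_ifs
    · exact ⟨zero_le_one, le_refl _⟩
    · refine ⟨Finset.sum_nonneg fun q _ => mul_nonneg ((hP a).1 q) (h q).1, ?_⟩
      rw [← (hP a).2]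
      exact Finset.sum_le_sum fun q _ => mul_le_of_le_one_right ((hP a).1 q) (h q).2

theorem reach_exists {S : Type*} [Fintype S] (P : S × S → S × S → ℝ) (hP : ∀ p, IsDist (P p)) :
    ∃ ρ, IsLfpOn (ReachF P) ρ := by
  obtain ⟨ρ, h1, h2, h3⟩ := reach_kt P hP
  exact ⟨ρ, h1, h2, fun e he h => h3 e he fun a => (congrFun h a).le⟩

theorem reach_le_pre {S : Type*} [Fintype S] (P : S × S → S × S → ℝ) (hP : ∀ p, IsDist (P p))
    (ρ : S × S → ℝ) (hρ : IsLfpOn (ReachF P) ρ) (e : S × S → ℝ) (he : Is01 e)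
    (h : ∀ a, ReachF P e a ≤ e a) (a : S × S) : ρ a ≤ e a := by
  obtain ⟨ρ', h1, h2, h3⟩ := reach_kt P hP
  exact (hρ.2.2 ρ' h1 h2 a).trans (h3 e he h a)

theorem avg_eq {X : Type*} [Fintype X] (μ f : X → ℝ) (hμ : IsDist μ) (m : ℝ)
    (hm : ∀ q, 0 < μ q → m ≤ f q) (h : ∑ q, μ q * f q = m) : ∀ q, 0 < μ q → f q = m := by
  have h0 : ∑ q, μ q * (f q - m) = 0 := by
    simp only [mul_sub, Finset.sum_sub_distrib, ← Finset.sum_mul, hμ.2, h]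
    ring
  have hn : ∀ q ∈ Finset.univ, 0 ≤ μ q * (f q - m) := by
    intro q _
    rcases (hμ.1 q).eq_or_lt with h | h
    · simp [← h]
    · exact mul_nonneg h.le (sub_nonneg.2 (hm q h))
  intro q hq
  have := (Finset.sum_eq_zero_iff_of_nonneg hn).1 h0 q (Finset.mem_univ q)
  rcases mul_eq_zero.1 this with h | h
  · exact absurd h hq.ne'
  · linarith

theorem avg_eq_one {X : Type*} [Fintype X] (μ f : X → ℝ) (hμ : IsDist μ)
    (hm : ∀ q, f q ≤ 1) (h : ∑ q, μ q * f q = 1) : ∀ q, 0 < μ q → f q = 1 := by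
  intro q hq
  have := avg_eq μ (fun q => - f q) hμ (-1) (fun q _ => by have := hm q; linarith)
    (by simp [h]) q hq
  linarith

theorem isCoupling_of_marg {X : Type*} [Fintype X] (ω : X × X → ℝ) (μ ν : X → ℝ)
    (hμ : IsDist μ) (h0 : ∀ q, 0 ≤ ω q) (h1 : ∀ x, ∑ y, ω (x, y) = μ x)
    (h2 : ∀ x, ∑ y, ω (y, x) = ν x) : IsCoupling ω μ ν := by
  refine ⟨⟨h0, ?_⟩, h1, h2⟩
  rw [Fintype.sum_prod_type]
  simp [h1, hμ.2]

theorem prod_coupling {X : Type*} [Fintype X] (μ ν : X → ℝ) (hμ : IsDist μ) (hν : IsDist ν) :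
    ∃ ω, IsCoupling ω μ ν := by
  refine ⟨fun p => μ p.1 * ν p.2, isCoupling_of_marg _ _ _ hμ ?_ ?_ ?_⟩
  · exact fun q => mul_nonneg (hμ.1 _) (hν.1 _)
  · intro x
    simp [← Finset.mul_sum, hν.2]
  · intro x
    simp [← Finset.sum_mul, hμ.2]

theorem diag_coupling {X : Type*} [Fintype X] (μ : X → ℝ) (hμ : IsDist μ) :
    ∃ ω, IsCoupling ω μ μ ∧ psupp ω ⊆ SDelta X := by
  refine ⟨fun p => if p.1 = p.2 then μ p.1 else 0, isCoupling_of_marg _ _ _ hμ ?_ ?_ ?_, ?_⟩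
  · intro q
    split_ifs
    · exact hμ.1 _
    · exact le_refl _
  · intro x
    simp
  · intro x
    simp
  · intro p hp
    by_contra hne
    have hne' : ¬ p.1 = p.2 := hne
    simp [psupp, hne'] at hp

theorem swap_coupling {X : Type*} [Fintype X] (ω : X × X → ℝ) (μ ν : X → ℝ)
    (hν : IsDist ν) (h : IsCoupling ω μ ν) : IsCoupling (fun p => ω p.swap) ν μ :=
  isCoupling_of_marg _ _ _ hν (fun q => h.1.1 _) (fun x => h.2.2 x) (fun x => h.2.1 x)

theorem comp_coupling {X : Type*} [Fintype X] (ω₁ ω₂ : X × X → ℝ) (μ ν ξ : X → ℝ)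
    (hμ : IsDist μ) (h₁ : IsCoupling ω₁ μ ν) (h₂ : IsCoupling ω₂ ν ξ) :
    ∃ ω, IsCoupling ω μ ξ ∧
      (∀ s u, 0 < ω (s, u) ↔ ∃ t, 0 < ω₁ (s, t) ∧ 0 < ω₂ (t, u)) := by
  have hν0 : ∀ t, 0 ≤ ν t := fun t => by
    rw [← h₁.2.2 t]; exact Finset.sum_nonneg fun _ _ => h₁.1.1 _
  have hl1 : ∀ s t, ω₁ (s, t) ≤ ν t := fun s t => by
    rw [← h₁.2.2 t]
    exact Finset.single_le_sum (f := fun y => ω₁ (y, t)) (fun _ _ => h₁.1.1 _) (Finset.mem_univ s)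
  have hl2 : ∀ t u, ω₂ (t, u) ≤ ν t := fun t u => by
    rw [← h₂.2.1 t]
    exact Finset.single_le_sum (f := fun y => ω₂ (t, y)) (fun _ _ => h₂.1.1 _) (Finset.mem_univ u)
  have hnn : ∀ s t u, 0 ≤ ω₁ (s, t) * ω₂ (t, u) / ν t := fun s t u =>
    div_nonneg (mul_nonneg (h₁.1.1 _) (h₂.1.1 _)) (hν0 t)
  refine ⟨fun p => ∑ t, ω₁ (p.1, t) * ω₂ (t, p.2) / ν t,
    isCoupling_of_marg _ _ _ hμ ?_ ?_ ?_, ?_⟩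
  · exact fun q => Finset.sum_nonneg fun t _ => hnn _ _ _
  · intro s
    dsimp only
    rw [Finset.sum_comm, ← h₁.2.1 s]
    refine Finset.sum_congr rfl fun t _ => ?_
    rw [← Finset.sum_div, ← Finset.mul_sum, h₂.2.1 t]
    by_cases h : ν t = 0
    · have a := hl1 s t
      have b := h₁.1.1 (s, t)
      rw [h] at a ⊢
      simp
      linarith
    · field_simp
  · intro u
    dsimp only
    rw [Finset.sum_comm, ← h₂.2.2 u]
    refine Finset.sum_congr rfl fun t _ => ?_
    rw [← Finset.sum_div, ← Finset.sum_mul, h₁.2.2 t]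
    by_cases h : ν t = 0
    · have a := hl2 t u
      have b := h₂.1.1 (t, u)
      rw [h] at a ⊢
      simp
      linarith
    · field_simp
  · intro s u
    constructor
    · intro h
      obtain ⟨t, -, ht⟩ := Finset.exists_ne_zero_of_sum_ne_zero (ne_of_gt h)
      refine ⟨t, lt_of_le_of_ne (h₁.1.1 _) ?_, lt_of_le_of_ne (h₂.1.1 _) ?_⟩
      · intro h0
        dsimp only at ht
        rw [← h0] at ht
        simp at ht
      · intro h0
        dsimp only at ht
        rw [← h0] at ht
        simp at ht
    · rintro ⟨t, a, b⟩
      have hpos : 0 < ω₁ (s, t) * ω₂ (t, u) / ν t :=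
        div_pos (mul_pos a b) (lt_of_lt_of_le a (hl1 s t))
      exact lt_of_lt_of_le hpos (Finset.single_le_sum
        (f := fun t => ω₁ (s, t) * ω₂ (t, u) / ν t) (fun _ _ => hnn _ _ _) (Finset.mem_univ t))

/-- Pairs from which the diagonal can be reached in at most `n` steps by couplings
supported in `W`. -/
inductive Attr {S L : Type*} [Fintype S] (ℓ : S → L) (τ : S → S → ℝ) (W : Set (S × S)) :
    ℕ → S × S → Prop
  | diag (n : ℕ) (p : S × S) (h : p.1 = p.2) : Attr ℓ τ W n p
  | step (n : ℕ) (p q : S × S) (ω : S × S → ℝ) (hl : ℓ p.1 = ℓ p.2)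
      (hω : IsCoupling ω (τ p.1) (τ p.2)) (hs : psupp ω ⊆ W) (hq : 0 < ω q)
      (h : Attr ℓ τ W n q) : Attr ℓ τ W (n + 1) p

section
variable {S L : Type*} [Fintype S] {ℓ : S → L} {τ : S → S → ℝ}

theorem Attr.label {W : Set (S × S)} {n : ℕ} {p : S × S} (h : Attr ℓ τ W n p) :
    ℓ p.1 = ℓ p.2 := by
  cases h with
  | diag _ _ h => rw [h]
  | step _ _ _ _ hl _ _ _ _ => exact hl

theorem Attr.mono {W W' : Set (S × S)} (hW : W ⊆ W') {n : ℕ} {p : S × S}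
    (h : Attr ℓ τ W n p) : Attr ℓ τ W' n p := by
  induction h with
  | diag n p h => exact .diag n p h
  | step n p q ω hl hω hs hq _ ih => exact .step n p q ω hl hω (hs.trans hW) hq ih

theorem Attr.swap (hτ : IsTransFn τ) {W : Set (S × S)} {n : ℕ} {p : S × S}
    (h : Attr ℓ τ W n p) : Attr ℓ τ {p | p.swap ∈ W} n p.swap := by
  induction h with
  | diag n p h => exact .diag n _ h.symm
  | step n p q ω hl hω hs hq _ ih =>
    refine .step n _ q.swap (fun p => ω p.swap) hl.symm (swap_coupling _ _ _ (hτ _) hω) ?_ ?_ ih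
    · intro r hr
      exact hs hr
    · simpa using hq

/-- The single policy extracted from `W ⊆ Attr W`. -/
theorem exists_policy (hτ : IsTransFn τ) (W : Set (S × S)) (hΔ : SDelta S ⊆ W)
    (hW : ∀ p ∈ W, ∃ n, Attr ℓ τ W n p) :
    ∃ (P : S × S → S × S → ℝ) (rk : S × S → ℕ), IsPolicy ℓ τ P ∧
      ∀ p ∈ W, psupp (P p) ⊆ W ∧ (p.1 ≠ p.2 → ∃ q, 0 < P p q ∧ rk q < rk p) := by
  let rk : S × S → ℕ := fun p => sInf {n | Attr ℓ τ W n p}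
  have key : ∀ p : S × S, ∃ ω : S × S → ℝ, IsDist ω ∧
      (ℓ p.1 = ℓ p.2 → IsCoupling ω (τ p.1) (τ p.2)) ∧ (ℓ p.1 ≠ ℓ p.2 → psupp ω = {p}) ∧
      (p ∈ W → psupp ω ⊆ W ∧ (p.1 ≠ p.2 → ∃ q, 0 < ω q ∧ rk q < rk p)) := by
    intro p
    by_cases hl : ℓ p.1 = ℓ p.2
    · by_cases hd : p.1 = p.2
      · obtain ⟨ω, h1, h2⟩ := diag_coupling (τ p.1) (hτ _)
        exact ⟨ω, h1.1, fun _ => by rw [← hd]; exact h1, fun h => absurd hl h,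
          fun _ => ⟨h2.trans hΔ, fun h => absurd hd h⟩⟩
      · by_cases hp : p ∈ W
        · have hr : Attr ℓ τ W (rk p) p := Nat.sInf_mem (s := {n | Attr ℓ τ W n p}) (hW p hp)
          generalize hk : rk p = k at hr
          cases hr with
          | diag _ _ h => exact absurd h hd
          | step n _ q ω _ hω hs hq h =>
            have hlt : rk q < n + 1 := Nat.lt_succ_of_le (Nat.sInf_le h)
            exact ⟨ω, hω.1, fun _ => hω, fun h => absurd hl h, fun _ => ⟨hs, fun _ => ⟨q, hq, hlt⟩⟩⟩
        · obtain ⟨ω, h1⟩ := prod_coupling (τ p.1) (τ p.2) (hτ _) (hτ _)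
          exact ⟨ω, h1.1, fun _ => h1, fun h => absurd hl h, fun h => absurd h hp⟩
    · refine ⟨fun q => if q = p then 1 else 0, ⟨?_, ?_⟩, fun h => absurd h hl, fun _ => ?_,
        fun hp => ?_⟩
      · intro q
        dsimp only
        split_ifs <;> norm_num
      · simp
      · ext q
        by_cases h : q = p <;> simp [psupp, h]
      · obtain ⟨n, hn⟩ := hW p hp
        exact absurd hn.label hl
  choose P h1 h2 h3 h4 using key
  exact ⟨P, rk, ⟨h1, h2, h3⟩, h4⟩

theorem robust_of_attr (hτ : IsTransFn τ) (W : Set (S × S)) (hΔ : SDelta S ⊆ W)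
    (hW : ∀ p ∈ W, ∃ n, Attr ℓ τ W n p) (p : S × S) (hp : p ∈ W) : Robust ℓ τ p.1 p.2 := by
  obtain ⟨P, rk, hP, hPW⟩ := exists_policy hτ W hΔ hW
  obtain ⟨ρ, hρ⟩ := reach_exists P hP.1
  refine ⟨P, ρ, hP, hρ, ?_⟩
  obtain ⟨p0, hp0, hmin⟩ := Set.exists_min_image W ρ (Set.toFinite W) ⟨p, hp⟩
  suffices h : 1 ≤ ρ p0 from le_antisymm (hρ.1 _).2 (h.trans (hmin p hp))
  by_contra hlt
  have main : ∀ k, ∀ q ∈ W, rk q = k → ρ q = ρ p0 → False := by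
    intro k
    induction k using Nat.strong_induction_on with
    | _ k ih =>
      intro q hq hk hm
      have hfix := congrFun hρ.2.1 q
      unfold ReachF at hfix
      split_ifs at hfix with hd
      · linarith
      · obtain ⟨hs, hr⟩ := hPW q hq
        obtain ⟨r, hr1, hr2⟩ := hr hd
        have := avg_eq (P q) ρ (hP.1 q) (ρ p0) (fun r hr => hmin r (hs hr)) (hfix.trans hm) r hr1
        exact ih (rk r) (hk ▸ hr2) r (hs hr1) rfl this
  exact main _ p0 hp0 rfl rfl

theorem attr_of_robust (p : S × S) (hp : Robust ℓ τ p.1 p.2) :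
    ∃ n, Attr ℓ τ {p : S × S | Robust ℓ τ p.1 p.2} n p := by
  obtain ⟨P, ρ, hP, hρ, h1⟩ := hp
  have hsucc : ∀ q : S × S, q.1 ≠ q.2 → ρ q = 1 → ∀ r, 0 < P q r → ρ r = 1 := by
    intro q hd hq
    have hfix := congrFun hρ.2.1 q
    unfold ReachF at hfix
    rw [if_neg hd] at hfix
    exact avg_eq_one (P q) ρ (hP.1 q) (fun r => (hρ.1 r).2) (hfix.trans hq)
  have hreach : ∀ q, ρ q = 1 → ∃ r : S × S, r.1 = r.2 ∧ Reach P q r := by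
    intro q hq
    by_contra hno
    have hle := reach_le_pre P hP.1 ρ hρ
      (fun q => if ∃ r : S × S, r.1 = r.2 ∧ Reach P q r then ρ q else 0) ?_ ?_ q
    · rw [if_neg hno] at hle
      linarith
    · intro a
      dsimp only
      split_ifs
      · exact hρ.1 a
      · exact ⟨le_refl _, zero_le_one⟩
    · intro a
      by_cases ha : ∃ r : S × S, r.1 = r.2 ∧ Reach P a r
      · rw [if_pos ha]
        conv_rhs => rw [← hρ.2.1]
        unfold ReachF
        split_ifs
        · exact le_refl _
        · refine Finset.sum_le_sum fun r _ => mul_le_mul_of_nonneg_left ?_ ((hP.1 a).1 r)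
          dsimp only
          split_ifs
          · exact le_refl _
          · exact (hρ.1 r).1
      · rw [if_neg ha]
        unfold ReachF
        rw [if_neg fun h => ha ⟨a, h, Relation.ReflTransGen.refl⟩]
        refine Finset.sum_nonpos fun r _ => ?_
        rcases ((hP.1 a).1 r).eq_or_lt with h | h
        · simp [← h]
        · dsimp only
          rw [if_neg, mul_zero]
          rintro ⟨x, hx, hrx⟩
          exact ha ⟨x, hx, Relation.ReflTransGen.head h hrx⟩
  obtain ⟨r, hr, hpath⟩ := hreach p h1
  replace h1 : ρ p = 1 := h1
  induction hpath using Relation.ReflTransGen.head_induction_on with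
  | refl => exact ⟨0, .diag 0 _ hr⟩
  | head hab hbr ih =>
    rename_i a b
    by_cases hd : a.1 = a.2
    · exact ⟨0, .diag 0 _ hd⟩
    · obtain ⟨n, hn⟩ := ih (hsucc a hd h1 b hab)
      by_cases hl : ℓ a.1 = ℓ a.2
      · refine ⟨n + 1, .step n a b (P a) hl (hP.2.1 a hl) ?_ hab hn⟩
        intro c hc
        exact ⟨P, ρ, hP, hρ, hsucc a hd h1 c hc⟩
      · have hb : b ∈ psupp (P a) := hab
        rw [hP.2.2 a hl] at hb
        have hba : b = a := hb
        exact ⟨n, hba ▸ hn⟩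

theorem robust_refl (hτ : IsTransFn τ) (s : S) : Robust ℓ τ s s :=
  robust_of_attr hτ (SDelta S) le_rfl (fun p hp => ⟨0, .diag 0 p hp⟩) (s, s) rfl

theorem robust_symm (hτ : IsTransFn τ) {s t : S} (h : Robust ℓ τ s t) : Robust ℓ τ t s := by
  refine robust_of_attr hτ {p : S × S | p.swap ∈ {p : S × S | Robust ℓ τ p.1 p.2}} ?_ ?_ (t, s) h
  · rintro ⟨a, b⟩ hab
    obtain rfl : a = b := hab
    exact robust_refl hτ a
  · intro p hp
    obtain ⟨n, hn⟩ := attr_of_robust p.swap hp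
    exact ⟨n, by simpa using hn.swap hτ⟩

theorem attr_coupling (hτ : IsTransFn τ) (W : Set (S × S)) (hΔ : SDelta S ⊆ W) {n : ℕ}
    {p : S × S} (h : Attr ℓ τ W n p) :
    ∃ ω, IsCoupling ω (τ p.1) (τ p.2) ∧ psupp ω ⊆ W := by
  cases h with
  | diag _ _ h =>
    obtain ⟨ω, h1, h2⟩ := diag_coupling (τ p.1) (hτ _)
    exact ⟨ω, by rw [← h]; exact h1, h2.trans hΔ⟩
  | step _ _ _ ω _ hω hs _ _ => exact ⟨ω, hω, hs⟩

theorem robust_trans (hτ : IsTransFn τ) {s t u : S} (h : Robust ℓ τ s t)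
    (h' : Robust ℓ τ t u) : Robust ℓ τ s u := by
  let R : Set (S × S) := {p : S × S | Robust ℓ τ p.1 p.2}
  let W : Set (S × S) := {p | ∃ t, (p.1, t) ∈ R ∧ (t, p.2) ∈ R}
  have hΔR : SDelta S ⊆ R := by
    rintro ⟨a, b⟩ hab
    obtain rfl : a = b := hab
    exact robust_refl hτ a
  have hRW : R ⊆ W := fun p hp => ⟨p.1, robust_refl hτ _, hp⟩
  have key : ∀ n p, Attr ℓ τ R n p → ∀ u, (p.2, u) ∈ R → ∃ m, Attr ℓ τ W m (p.1, u) := by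
    intro n p hp
    induction hp with
    | diag n p h =>
      intro u hu
      obtain ⟨m, hm⟩ := attr_of_robust (p.2, u) hu
      rw [h]
      exact ⟨m, hm.mono hRW⟩
    | step n p q ω hl hω hs hq _ ih =>
      intro u hu
      obtain ⟨m, hm⟩ := attr_of_robust (p.2, u) hu
      obtain ⟨ω', hω', hs'⟩ := attr_coupling hτ R hΔR hm
      obtain ⟨ω'', hc, hiff⟩ := comp_coupling ω ω' _ _ _ (hτ _) hω hω'
      have hν : 0 < τ p.2 q.2 := by
        rw [← hω.2.2 q.2]
        exact lt_of_lt_of_le hq (Finset.single_le_sum (f := fun y => ω (y, q.2))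
          (fun _ _ => hω.1.1 _) (Finset.mem_univ q.1))
      rw [← hω'.2.1 q.2] at hν
      obtain ⟨u', -, hu'⟩ := Finset.exists_ne_zero_of_sum_ne_zero hν.ne'
      have hu'' : 0 < ω' (q.2, u') := lt_of_le_of_ne (hω'.1.1 _) (Ne.symm hu')
      obtain ⟨k, hk⟩ := ih u' (hs' hu'')
      refine ⟨k + 1, .step k _ (q.1, u') ω'' (hl.trans hm.label) hc ?_ ?_ hk⟩
      · rintro ⟨a, b⟩ hab
        obtain ⟨c, h1, h2⟩ := (hiff a b).1 hab
        exact ⟨c, hs h1, hs' h2⟩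
      · exact (hiff _ _).2 ⟨q.2, hq, hu''⟩
  refine robust_of_attr hτ W (hΔR.trans hRW) ?_ (s, u) ⟨t, h, h'⟩
  rintro ⟨a, b⟩ ⟨c, h1, h2⟩
  obtain ⟨n, hn⟩ := attr_of_robust (a, c) h1
  exact key n _ hn b h2

end

/-- Proposition 9: robust probabilistic bisimilarity `≃` is a robust bisimulation. -/
theorem robust_is_robust_bisimulation {S L : Type*} [Fintype S] [Nonempty S] [Fintype L]
    (ℓ : S → L) (hℓ : ∃ a b : S, ℓ a ≠ ℓ b)
    (τ : S → S → ℝ) (hτ : IsTransFn τ) :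
    IsRobustBisim ℓ τ {p : S × S | Robust ℓ τ p.1 p.2} := by
  have hΔ : SDelta S ⊆ {p : S × S | Robust ℓ τ p.1 p.2} := by
    rintro ⟨a, b⟩ hab
    obtain rfl : a = b := hab
    exact robust_refl hτ a
  refine ⟨⟨⟨robust_refl hτ, fun h => robust_symm hτ h, fun h h' => robust_trans hτ h h'⟩, ?_⟩, ?_⟩
  · intro p hp
    obtain ⟨n, hn⟩ := attr_of_robust p hp
    exact ⟨hn.label, attr_coupling hτ _ hΔ hn⟩
  · obtain ⟨P, rk, hP, hPW⟩ := exists_policy hτ _ hΔ (fun p hp => attr_of_robust (ℓ := ℓ) p hp)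
    have main : ∀ k, ∀ p ∈ {p : S × S | Robust ℓ τ p.1 p.2}, rk p = k →
        SupportsPathToDelta P {p : S × S | Robust ℓ τ p.1 p.2} p := by
      intro k
      induction k using Nat.strong_induction_on with
      | _ k ih =>
        intro p hp hk
        obtain ⟨hs, hr⟩ := hPW p hp
        by_cases hd : p.1 = p.2
        · exact ⟨p, hd, Relation.ReflTransGen.refl, hp, hs⟩
        · obtain ⟨q, hq, hlt⟩ := hr hd
          obtain ⟨r, h1, h2, h3⟩ := ih (rk q) (hk ▸ hlt) q (hs hq) rfl
          exact ⟨r, h1, Relation.ReflTransGen.head ⟨hp, hs, hq⟩ h2, h3⟩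
    intro p hp
    exact ⟨P, hP, main _ p hp rfl⟩
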